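/- Let W be a wedge in ℝ² and let G ⊆ W be a guard set with |G| ≥ 11. Then there exist a point x ∈ W and two distinct guards g, g' ∈ G such that x is hidden from g and x is hidden from g'. -/

import Mathlib

/-!
In affine coordinates the wedge becomes the closed first quadrant. The points hidden from a guard `g`
behind a guard `b` form the open ray from `b` pointing away from `g`, so the claim is that two such
rays with different sources `g` meet inside the quadrant. Assume that this never happens
(`NoDark`).

The convex hull of the guards then has at most six vertices (`no_seven`). At each edge `b c` of a
convex heptagon of guards, the two neighbouring edges, prolonged across the ends of `b c`, must not
meet inside the quadrant (`ear`): either the prolongations do not meet at all, or they meet where `x`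
is negative, or where `y` is negative. The exterior angles of a heptagon sum to `2 π`, and a linear
functional falls and rises only once around a convex polygon; it follows that each alternative holds
for at most two edges, which accounts for only six of the seven.

Moreover, a closed triangle of guards contains at most one further guard (`triangle`). For two
interior guards `d` and `e`, unless they are on one line with a vertex, some ray from one vertex
through `d` crosses, beyond `d` and `e`, a ray from another vertex through `e` (`int_int`), and the
crossing point is in the triangle, hence in the quadrant. Collinear and boundary positions produce
dark points directly; here one uses that a line containing three guards must leave the quadrant at
both outer guards (`blocked_end`, `three`).

Finally, a hull with `m ≥ 3` vertices is a fan of `m - 2` triangles (`polygon`, `fan`), each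
containing at most one guard that is not a hull vertex. Hence the number of guards is at most
`m + (m - 2) ≤ 10` (`quadrant`).
-/

open Set

noncomputable section

/-- The Euclidean plane ℝ². -/
abbrev Plane : Type := EuclideanSpace ℝ (Fin 2)

/-- `P` is a convex `n`-gon with vertex set `V`: `V` is a finite set of exactly `n ≥ 3`
points, `P` is its convex hull, and each point of `V` is an extreme point of `P`. -/
def IsConvexPolygon (n : ℕ) (V : Finset Plane) (P : Set Plane) : Prop :=
  3 ≤ n ∧ V.card = n ∧ P = convexHull ℝ (V : Set Plane) ∧
    ∀ v ∈ V, v ∈ Set.extremePoints ℝ P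

/-- Point `p` is hidden from guard `g` (w.r.t. guard set `G`): some other guard `b ∈ G`
lies strictly between `g` and `p`. -/
def Hidden (G : Finset Plane) (g p : Plane) : Prop :=
  ∃ b ∈ G, b ≠ g ∧ b ∈ openSegment ℝ g p

/-- `G` `k`-covers `P`: every point of `P` is visible from at least `k` guards of `G`. -/
def KCovers (G : Finset Plane) (P : Set Plane) (k : ℕ) : Prop :=
  ∀ p ∈ P, k ≤ {g ∈ (G : Set Plane) | ¬ Hidden G g p}.ncard

/-- `W` is a wedge: a closed planar convex cone with apex `a` spanned by two
linearly independent directions `u`, `v`. -/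
def IsWedge (W : Set Plane) : Prop :=
  ∃ a u v : Plane, LinearIndependent ℝ ![u, v] ∧
    W = {x | ∃ s t : ℝ, 0 ≤ s ∧ 0 ≤ t ∧ x = a + s • u + t • v}

/-! ### Orientation and dark points -/

/-- Twice the signed area of the triangle `p q r`; it is positive when `p, q, r` are in
counterclockwise order. -/
def cr (p q r : ℝ × ℝ) : ℝ := (q.1 - p.1) * (r.2 - p.2) - (q.2 - p.2) * (r.1 - p.1)

/-- No point of the closed first quadrant is hidden from two distinct guards of `G`. The points
hidden from `g` behind `b` are written `b + s (b - g)` with `s > 0`. Membership in the quadrant is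
asked of the first of the two equal expressions only. -/
def NoDark (G : Finset (ℝ × ℝ)) : Prop :=
  ∀ g ∈ G, ∀ b ∈ G, ∀ g' ∈ G, ∀ b' ∈ G, ∀ s t : ℝ, b ≠ g → b' ≠ g' → g ≠ g' → 0 < s → 0 < t →
    b.1 + s * (b.1 - g.1) = b'.1 + t * (b'.1 - g'.1) →
    b.2 + s * (b.2 - g.2) = b'.2 + t * (b'.2 - g'.2) →
    0 ≤ b.1 + s * (b.1 - g.1) → 0 ≤ b.2 + s * (b.2 - g.2) → False

lemma cr_rot (p q r : ℝ × ℝ) : cr q r p = cr p q r := by unfold cr; ring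

/-- In a convex quadrilateral `a b c d`, a linear functional cannot take smaller values at both ends
of the diagonal `b d` than at both ends of the diagonal `a c`, because the diagonals cross. Weak
inequalities suffice as soon as `c` is strictly above `b` or `d`. -/
lemma quad {a b c d : ℝ × ℝ} (α β : ℝ)
    (h1 : 0 < cr a b c) (h2 : 0 < cr a b d) (h3 : 0 < cr a c d) (h4 : 0 < cr b c d)
    (hba : α * b.1 + β * b.2 ≤ α * a.1 + β * a.2) (hbc : α * b.1 + β * b.2 ≤ α * c.1 + β * c.2)
    (hda : α * d.1 + β * d.2 ≤ α * a.1 + β * a.2) (hdc : α * d.1 + β * d.2 ≤ α * c.1 + β * c.2)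
    (hs : α * b.1 + β * b.2 < α * c.1 + β * c.2 ∨ α * d.1 + β * d.2 < α * c.1 + β * c.2) :
    False := by
  -- `e1` and `e2` express the crossing point of the diagonals in terms of either diagonal.
  have e1 : cr b c d * (α * a.1 + β * a.2) + cr a b d * (α * c.1 + β * c.2)
      = cr a c d * (α * b.1 + β * b.2) + cr a b c * (α * d.1 + β * d.2) := by
    unfold cr; ring
  have e2 : cr b c d + cr a b d = cr a c d + cr a b c := by unfold cr; ring
  generalize α * a.1 + β * a.2 = xa at *
  generalize α * b.1 + β * b.2 = xb at *
  generalize α * c.1 + β * c.2 = xc at *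
  generalize α * d.1 + β * d.2 = xd at *
  generalize cr a b c = A at *
  generalize cr a b d = B at *
  generalize cr a c d = C at *
  generalize cr b c d = D at *
  rcases le_total xb xd with h | h
  · have k1 := mul_nonneg h4.le (sub_nonneg.2 hda)
    have k2 := mul_nonneg h2.le (sub_nonneg.2 hdc)
    have k3 := mul_nonneg h3.le (sub_nonneg.2 h)
    have hC : C = D + B - A := by linarith
    have k4 : C * (xd - xb) = 0 := by subst hC; nlinarith
    have k5 : B * (xc - xd) = 0 := by subst hC; nlinarith
    have := (mul_eq_zero.1 k4).resolve_left h3.ne'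
    have := (mul_eq_zero.1 k5).resolve_left h2.ne'
    rcases hs with hs | hs <;> linarith
  · have k1 := mul_nonneg h4.le (sub_nonneg.2 hba)
    have k2 := mul_nonneg h2.le (sub_nonneg.2 hbc)
    have k3 := mul_nonneg h1.le (sub_nonneg.2 h)
    have hA : A = D + B - C := by linarith
    have k4 : A * (xb - xd) = 0 := by subst hA; nlinarith
    have k5 : B * (xc - xb) = 0 := by subst hA; nlinarith
    have := (mul_eq_zero.1 k4).resolve_left h1.ne'
    have := (mul_eq_zero.1 k5).resolve_left h2.ne'
    rcases hs with hs | hs <;> linarith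

/-! ### Convex heptagons of guards -/

/-- `p 0, …, p 6` are, in this counterclockwise order, the vertices of a strictly convex
heptagon. -/
def CCW7 (p : Fin 7 → ℝ × ℝ) : Prop := ∀ i j k, i < j → j < k → 0 < cr (p i) (p j) (p k)

set_option maxRecDepth 100000 in
/-- A cyclic shift of `Fin 7` carries an increasing triple to a cyclic rotation of an increasing
triple. -/
lemma rot_order : ∀ c i j k : Fin 7, i < j → j < k →
    (i + c < j + c ∧ j + c < k + c) ∨ (j + c < k + c ∧ k + c < i + c) ∨
      (k + c < i + c ∧ i + c < j + c) := by decide +kernel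

lemma CCW7.rot {p : Fin 7 → ℝ × ℝ} (h : CCW7 p) (c : Fin 7) : CCW7 (fun i => p (i + c)) := by
  intro i j k hij hjk
  rcases rot_order c i j k hij hjk with ⟨h1, h2⟩ | ⟨h1, h2⟩ | ⟨h1, h2⟩
  · exact h _ _ _ h1 h2
  · have := h _ _ _ h1 h2
    rwa [cr_rot] at this
  · have := h _ _ _ h1 h2
    rwa [cr_rot, cr_rot] at this

/-- `quad` for four vertices of a heptagon, with either of the two diagonals as the lower one. -/
lemma CCW7.alt {p : Fin 7 → ℝ × ℝ} (h : CCW7 p) (α β : ℝ) (i j k l : Fin 7)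
    (hij : i < j) (hjk : j < k) (hkl : k < l) :
    (α * (p j).1 + β * (p j).2 ≤ α * (p i).1 + β * (p i).2 →
     α * (p j).1 + β * (p j).2 ≤ α * (p k).1 + β * (p k).2 →
     α * (p l).1 + β * (p l).2 ≤ α * (p i).1 + β * (p i).2 →
     α * (p l).1 + β * (p l).2 ≤ α * (p k).1 + β * (p k).2 →
     α * (p j).1 + β * (p j).2 < α * (p k).1 + β * (p k).2 ∨
       α * (p l).1 + β * (p l).2 < α * (p k).1 + β * (p k).2 → False) ∧
    (α * (p i).1 + β * (p i).2 ≤ α * (p j).1 + β * (p j).2 →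
     α * (p k).1 + β * (p k).2 ≤ α * (p j).1 + β * (p j).2 →
     α * (p k).1 + β * (p k).2 ≤ α * (p l).1 + β * (p l).2 →
     α * (p i).1 + β * (p i).2 ≤ α * (p l).1 + β * (p l).2 →
     α * (p k).1 + β * (p k).2 < α * (p l).1 + β * (p l).2 ∨
       α * (p i).1 + β * (p i).2 < α * (p l).1 + β * (p l).2 → False) := by
  have h1 := h i j k hij hjk
  have h2 := h i j l hij (hjk.trans hkl)
  have h3 := h i k l (hij.trans hjk) hkl
  have h4 := h j k l hjk hkl
  refine ⟨quad α β h1 h2 h3 h4, fun a b c d e => ?_⟩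
  rw [← cr_rot] at h1 h2 h3
  exact quad α β h4 h1 h2 h3 b c a d e

/-- Around a convex polygon a linear functional falls once and rises once. It therefore cannot fall,
rise, fall and rise along the edges `01`, `23`, `34`, `56`. -/
lemma CCW7.desc_asc_three {p : Fin 7 → ℝ × ℝ} (h : CCW7 p) (α β : ℝ)
    (h10 : α * (p 1).1 + β * (p 1).2 < α * (p 0).1 + β * (p 0).2)
    (h23 : α * (p 2).1 + β * (p 2).2 < α * (p 3).1 + β * (p 3).2)
    (h43 : α * (p 4).1 + β * (p 4).2 < α * (p 3).1 + β * (p 3).2)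
    (h56 : α * (p 5).1 + β * (p 5).2 < α * (p 6).1 + β * (p 6).2) : False := by
  have a1 := (h.alt α β 2 3 4 5 (by decide) (by decide) (by decide)).2
  have a2 := (h.alt α β 1 2 3 4 (by decide) (by decide) (by decide)).1
  have a3 := (h.alt α β 1 3 5 6 (by decide) (by decide) (by decide)).2
  have a4 := (h.alt α β 0 1 3 5 (by decide) (by decide) (by decide)).1
  grind

/-- The first hypothesis says that the prolongations of the edges `01` and `32` do not meet on the
outer side of the edge `12`, that is, that the exterior angles at `1` and `2` add up to at least `π`.
As all exterior angles are positive with sum `2 π`, the same cannot hold at `3` and `4`. -/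
lemma CCW7.div_two {p : Fin 7 → ℝ × ℝ} (h : CCW7 p)
    (h1 : ((p 1).1 - (p 0).1) * ((p 3).2 - (p 2).2) - ((p 1).2 - (p 0).2) * ((p 3).1 - (p 2).1) ≤ 0)
    (h2 : ((p 3).1 - (p 2).1) * ((p 5).2 - (p 4).2) - ((p 3).2 - (p 2).2) * ((p 5).1 - (p 4).1) ≤ 0) :
    False := by
  -- Up to a positive factor, `α x + β y` is the signed distance to the line through `p 2`, `p 3`.
  obtain ⟨α, hα⟩ : ∃ α, α = -((p 3).2 - (p 2).2) := ⟨_, rfl⟩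
  obtain ⟨β, hβ⟩ : ∃ β, β = ((p 3).1 - (p 2).1) := ⟨_, rfl⟩
  have c0 := h 0 2 3 (by decide) (by decide)
  have c1 := h 1 2 3 (by decide) (by decide)
  have c4 := h 2 3 4 (by decide) (by decide)
  have a1 := (h.alt α β 1 2 4 5 (by decide) (by decide) (by decide)).1
  have a2 := (h.alt α β 0 1 2 4 (by decide) (by decide) (by decide)).2
  unfold cr at c0 c1 c4
  have k1 : α * (p 0).1 + β * (p 0).2 ≤ α * (p 1).1 + β * (p 1).2 := by
    subst hα hβ; linarith
  have k2 : α * (p 5).1 + β * (p 5).2 ≤ α * (p 4).1 + β * (p 4).2 := by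
    subst hα hβ; linarith
  have k3 : α * (p 2).1 + β * (p 2).2 < α * (p 0).1 + β * (p 0).2 := by
    subst hα hβ; linarith
  have k4 : α * (p 2).1 + β * (p 2).2 < α * (p 1).1 + β * (p 1).2 := by
    subst hα hβ; linarith
  have k5 : α * (p 2).1 + β * (p 2).2 < α * (p 4).1 + β * (p 4).2 := by
    subst hα hβ; linarith
  grind

/-- Exterior angles adding up to at least `π` at `1` and `2` exclude the same at `4` and `5`; compare
`CCW7.div_two`. -/
lemma CCW7.div_three {p : Fin 7 → ℝ × ℝ} (h : CCW7 p)
    (h1 : ((p 1).1 - (p 0).1) * ((p 3).2 - (p 2).2) - ((p 1).2 - (p 0).2) * ((p 3).1 - (p 2).1) ≤ 0)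
    (h2 : ((p 4).1 - (p 3).1) * ((p 6).2 - (p 5).2) - ((p 4).2 - (p 3).2) * ((p 6).1 - (p 5).1) ≤ 0) :
    False := by
  have b2 := h.div_two h1
  -- Up to a positive factor, `α x + β y` is the signed distance to the line through `p 2`, `p 3`.
  obtain ⟨α, hα⟩ : ∃ α, α = -((p 3).2 - (p 2).2) := ⟨_, rfl⟩
  obtain ⟨β, hβ⟩ : ∃ β, β = ((p 3).1 - (p 2).1) := ⟨_, rfl⟩
  have c0 := h 0 2 3 (by decide) (by decide)
  have c1 := h 1 2 3 (by decide) (by decide)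
  have c4 := h 2 3 4 (by decide) (by decide)
  have c5 := h 2 3 5 (by decide) (by decide)
  have c345 := h 3 4 5 (by decide) (by decide)
  have c456 := h 4 5 6 (by decide) (by decide)
  have a1 := (h.alt α β 1 2 5 6 (by decide) (by decide) (by decide)).1
  have a2 := (h.alt α β 0 1 2 5 (by decide) (by decide) (by decide)).2
  unfold cr at c0 c1 c4 c5 c345 c456
  have k1 : α * (p 0).1 + β * (p 0).2 ≤ α * (p 1).1 + β * (p 1).2 := by
    subst hα hβ; linarith
  have k2 : α * (p 4).1 + β * (p 4).2 < α * (p 5).1 + β * (p 5).2 := by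
    by_contra! hc
    exact b2 (by subst hα hβ; linarith)
  have k3 : α * (p 2).1 + β * (p 2).2 < α * (p 0).1 + β * (p 0).2 := by
    subst hα hβ; linarith
  have k4 : α * (p 2).1 + β * (p 2).2 < α * (p 1).1 + β * (p 1).2 := by
    subst hα hβ; linarith
  have k5 : α * (p 2).1 + β * (p 2).2 < α * (p 5).1 + β * (p 5).2 := by
    subst hα hβ; linarith
  have k7 : α * (p 3).1 + β * (p 3).2 < α * (p 4).1 + β * (p 4).2 := by
    subst hα hβ; linarith
  have k6 : α * (p 5).1 + β * (p 5).2 < α * (p 6).1 + β * (p 6).2 := by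
    grind
  -- The functional rises along the edges `34`, `45` and `56`, so these directions lie in an open
  -- half-plane; with left turns at `4` and `5`, this contradicts `h2`.
  have e1 := mul_pos c345 (sub_pos.2 k6)
  have e2 := mul_pos c456 (sub_pos.2 k7)
  have e3 := mul_nonneg (neg_nonneg.2 h2) (sub_pos.2 k2).le
  linarith

set_option maxRecDepth 100000 in
lemma card_le_two : ∀ S : Finset (Fin 7), (∀ i ∈ S, i + 2 ∉ S ∧ i + 3 ∉ S) → S.card ≤ 2 := by
  decide +kernel

/-- For consecutive edges `a b`, `b c`, `c d` of a convex polygon of guards, prolong `a b` beyond `b`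
and `d c` beyond `c`. If the prolongations meet, their common point is hidden from `a` and from `d`,
hence it lies outside the quadrant: one of its coordinates is negative, and that coordinate
decreases both from `a` to `b` and from `d` to `c`. -/
lemma ear {G : Finset (ℝ × ℝ)} (hG : NoDark G) (hW : ∀ q ∈ G, 0 ≤ q.1 ∧ 0 ≤ q.2)
    {a b c d : ℝ × ℝ} (ha : a ∈ G) (hb : b ∈ G) (hc : c ∈ G) (hd : d ∈ G)
    (habc : 0 < cr a b c) (hbcd : 0 < cr b c d) (had : a ≠ d) :
    ((b.1 - a.1) * (d.2 - c.2) - (b.2 - a.2) * (d.1 - c.1) ≤ 0) ∨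
    (b.1 < a.1 ∧ c.1 < d.1) ∨ (b.2 < a.2 ∧ c.2 < d.2) := by
  by_contra! hcon
  obtain ⟨hD, hx, hy⟩ := hcon
  have hba : b ≠ a := by rintro rfl; simp [cr] at habc
  have hcd : c ≠ d := by rintro rfl; unfold cr at hbcd; linarith
  set D := (b.1 - a.1) * (d.2 - c.2) - (b.2 - a.2) * (d.1 - c.1) with hDdef
  -- The prolongations meet at the parameters `cr b c d / D` and `cr a b c / D`.
  have hs : 0 < cr b c d / D := by positivity
  have ht : 0 < cr a b c / D := by positivity
  have e1 : b.1 + cr b c d / D * (b.1 - a.1) = c.1 + cr a b c / D * (c.1 - d.1) := by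
    field_simp; rw [hDdef]; unfold cr; ring
  have e2 : b.2 + cr b c d / D * (b.2 - a.2) = c.2 + cr a b c / D * (c.2 - d.2) := by
    field_simp; rw [hDdef]; unfold cr; ring
  refine hG a ha b hb d hd c hc _ _ hba hcd had hs ht e1 e2 ?_ ?_
  · rcases le_or_gt a.1 b.1 with h | h
    · exact add_nonneg (hW b hb).1 (mul_nonneg hs.le (sub_nonneg.2 h))
    · rw [e1]; exact add_nonneg (hW c hc).1 (mul_nonneg ht.le (sub_nonneg.2 (hx h)))
  · rcases le_or_gt a.2 b.2 with h | h
    · exact add_nonneg (hW b hb).2 (mul_nonneg hs.le (sub_nonneg.2 h))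
    · rw [e2]; exact add_nonneg (hW c hc).2 (mul_nonneg ht.le (sub_nonneg.2 (hy h)))

/-- Each of the three alternatives of `ear` holds for at most two of the seven edges of a convex
heptagon, since two such edges cannot be at cyclic distance `2` or `3`. -/
lemma no_seven {G : Finset (ℝ × ℝ)} (hG : NoDark G) (hW : ∀ q ∈ G, 0 ≤ q.1 ∧ 0 ≤ q.2)
    {p : Fin 7 → ℝ × ℝ} (h : CCW7 p) (hp : ∀ i, p i ∈ G) : False := by
  classical
  -- `C`, `X`, `Y`: the edges from `1 + i` to `2 + i` falling under the respective alternative.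
  let C : Finset (Fin 7) := Finset.univ.filter fun i =>
    ((p (1 + i)).1 - (p (0 + i)).1) * ((p (3 + i)).2 - (p (2 + i)).2)
      - ((p (1 + i)).2 - (p (0 + i)).2) * ((p (3 + i)).1 - (p (2 + i)).1) ≤ 0
  let X : Finset (Fin 7) := Finset.univ.filter fun i =>
    (p (1 + i)).1 < (p (0 + i)).1 ∧ (p (2 + i)).1 < (p (3 + i)).1
  let Y : Finset (Fin 7) := Finset.univ.filter fun i =>
    (p (1 + i)).2 < (p (0 + i)).2 ∧ (p (2 + i)).2 < (p (3 + i)).2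
  have r3 : ∀ i j : Fin 7, j + (i + 3) = (j + 3) + i := by decide
  have r2 : ∀ i j : Fin 7, j + (i + 2) = (j + 2) + i := by decide
  have hC : C.card ≤ 2 := by
    refine card_le_two C fun i hi => ⟨fun h' => ?_, fun h' => ?_⟩
    · simp only [C, Finset.mem_filter, Finset.mem_univ, true_and, r2] at hi h'
      exact (h.rot i).div_two hi h'
    · simp only [C, Finset.mem_filter, Finset.mem_univ, true_and, r3] at hi h'
      exact (h.rot i).div_three hi h'
  have hX : X.card ≤ 2 := by
    refine card_le_two X fun i hi => ⟨fun h' => ?_, fun h' => ?_⟩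
    · simp only [X, Finset.mem_filter, Finset.mem_univ, true_and, r2] at hi h'
      exact lt_asymm hi.2 h'.1
    · simp only [X, Finset.mem_filter, Finset.mem_univ, true_and, r3] at hi h'
      exact (h.rot i).desc_asc_three 1 0 (by simpa using hi.1) (by simpa using hi.2)
        (by simpa using h'.1) (by simpa using h'.2)
  have hY : Y.card ≤ 2 := by
    refine card_le_two Y fun i hi => ⟨fun h' => ?_, fun h' => ?_⟩
    · simp only [Y, Finset.mem_filter, Finset.mem_univ, true_and, r2] at hi h'
      exact lt_asymm hi.2 h'.1
    · simp only [Y, Finset.mem_filter, Finset.mem_univ, true_and, r3] at hi h'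
      exact (h.rot i).desc_asc_three 0 1 (by simpa using hi.1) (by simpa using hi.2)
        (by simpa using h'.1) (by simpa using h'.2)
  have hcov : (Finset.univ : Finset (Fin 7)) ⊆ C ∪ (X ∪ Y) := by
    intro i _
    have hr := h.rot i
    have had : p (0 + i) ≠ p (3 + i) := by
      intro he
      have := hr 0 1 3 (by decide) (by decide)
      simp only [he, cr] at this
      linarith
    have := ear hG hW (hp (0 + i)) (hp (1 + i)) (hp (2 + i)) (hp (3 + i))
      (hr 0 1 2 (by decide) (by decide)) (hr 1 2 3 (by decide) (by decide)) had
    simpa only [C, X, Y, Finset.mem_union, Finset.mem_filter, Finset.mem_univ, true_and] using this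
  have h1 := Finset.card_le_card hcov
  have h2 := Finset.card_union_le C (X ∪ Y)
  have h3 := Finset.card_union_le X Y
  simp only [Finset.card_univ, Fintype.card_fin] at h1
  omega

/-! ### Collinear guards -/

/-- One coordinate of a point moving from `r` straight away from `p`: it stays nonnegative for a short
time, unless `r` is on the axis and `p` is not. -/
lemma exists_ext {r p : ℝ} (hr : 0 ≤ r) (hp : 0 ≤ p) (h : ¬(r = 0 ∧ 0 < p)) :
    ∃ τ > 0, ∀ t, 0 < t → t ≤ τ → 0 ≤ r + t * (r - p) := by
  rcases hr.eq_or_lt with h0 | h0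
  · have : p = 0 := by
      by_contra h'
      exact h ⟨h0.symm, lt_of_le_of_ne hp (Ne.symm h')⟩
    exact ⟨1, one_pos, fun t _ _ => by rw [← h0, this]; simp⟩
  · refine ⟨r / (p + 1), by positivity, fun t ht htt => ?_⟩
    rw [le_div_iff₀ (by positivity)] at htt
    nlinarith

/-- Let `q` be a guard strictly between the guards `p` and `r`. Points just beyond `r` are hidden from
both `p` and `q`, so the line leaves the quadrant at `r`: some axis contains `r` but not `p`. -/
lemma blocked_end {G : Finset (ℝ × ℝ)} (hG : NoDark G) (hW : ∀ q ∈ G, 0 ≤ q.1 ∧ 0 ≤ q.2)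
    {p q r : ℝ × ℝ} (hp : p ∈ G) (hq : q ∈ G) (hr : r ∈ G) (hpr : p ≠ r) {l : ℝ} (h0 : 0 < l)
    (h1 : l < 1) (e1 : q.1 = (1 - l) * p.1 + l * r.1) (e2 : q.2 = (1 - l) * p.2 + l * r.2) :
    (r.1 = 0 ∧ 0 < p.1) ∨ (r.2 = 0 ∧ 0 < p.2) := by
  by_contra! hcon
  obtain ⟨x, hx, hx'⟩ := exists_ext (hW r hr).1 (hW p hp).1 (by simpa using hcon.1)
  obtain ⟨y, hy, hy'⟩ := exists_ext (hW r hr).2 (hW p hp).2 (by simpa using hcon.2)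
  have hl : (1 - l) ≠ 0 := by linarith
  have hpq : p ≠ q := by
    rintro rfl
    exact hpr (Prod.ext (mul_left_cancel₀ h0.ne' (by linarith))
      (mul_left_cancel₀ h0.ne' (by linarith)))
  have hrq : r ≠ q := by
    rintro rfl
    exact hpr (Prod.ext (mul_left_cancel₀ hl (by linarith)) (mul_left_cancel₀ hl (by linarith)))
  have hm : 0 < min x y := lt_min hx hy
  -- `r + m (r - p) = r + m / (1 - l) * (r - q)`, as `r - q = (1 - l) (r - p)`.
  refine hG p hp r hr q hq r hr (min x y) (min x y / (1 - l)) hpr.symm hrq hpq hm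
    (div_pos hm (by linarith)) ?_ ?_ (hx' _ hm (min_le_left _ _)) (hy' _ hm (min_le_right _ _))
  · rw [e1]; field_simp; ring
  · rw [e2]; field_simp; ring

/-- A guard `q` strictly between two guards `p` and `r` is in the open quadrant: by `blocked_end` at
both ends, the outer guards lie on different axes. The conclusion records this for `r` only. -/
lemma three {G : Finset (ℝ × ℝ)} (hG : NoDark G) (hW : ∀ q ∈ G, 0 ≤ q.1 ∧ 0 ≤ q.2)
    {p q r : ℝ × ℝ} (hp : p ∈ G) (hq : q ∈ G) (hr : r ∈ G) (hpr : p ≠ r) {l : ℝ} (h0 : 0 < l)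
    (h1 : l < 1) (e1 : q.1 = (1 - l) * p.1 + l * r.1) (e2 : q.2 = (1 - l) * p.2 + l * r.2) :
    (r.1 = 0 ∨ r.2 = 0) ∧ 0 < q.1 ∧ 0 < q.2 := by
  have k1 := blocked_end hG hW hp hq hr hpr h0 h1 e1 e2
  have k2 := blocked_end hG hW hr hq hp hpr.symm (l := 1 - l) (by linarith) (by linarith)
    (by linarith) (by linarith)
  have h1' : 0 < 1 - l := by linarith
  rw [e1, e2]
  rcases k1 with ⟨a, b⟩ | ⟨a, b⟩ <;> rcases k2 with ⟨c, d⟩ | ⟨c, d⟩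
  · linarith
  · exact ⟨Or.inl a, by rw [a]; simpa using mul_pos h1' b, by rw [c]; simpa using mul_pos h0 d⟩
  · exact ⟨Or.inr a, by rw [c]; simpa using mul_pos h0 d, by rw [a]; simpa using mul_pos h1' b⟩
  · linarith

/-! ### Triangles of guards -/

/-- `d` is the point `a A + b B + c C` of the closed, possibly degenerate triangle `A B C`, with
barycentric coordinates `a, b, c`. -/
def Bary (A B C d : ℝ × ℝ) (a b c : ℝ) : Prop :=
  0 ≤ a ∧ 0 ≤ b ∧ 0 ≤ c ∧ a + b + c = 1 ∧ d.1 = a * A.1 + b * B.1 + c * C.1 ∧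
    d.2 = a * A.2 + b * B.2 + c * C.2

lemma Bary.rot {A B C d : ℝ × ℝ} {a b c : ℝ} (h : Bary A B C d a b c) : Bary B C A d b c a := by
  obtain ⟨h1, h2, h3, h4, h5, h6⟩ := h
  exact ⟨h2, h3, h1, by linarith, by linarith, by linarith⟩

lemma Bary.swap {A B C d : ℝ × ℝ} {a b c : ℝ} (h : Bary A B C d a b c) : Bary A C B d a c b := by
  obtain ⟨h1, h2, h3, h4, h5, h6⟩ := h
  exact ⟨h1, h3, h2, by linarith, by linarith, by linarith⟩

/-- If guards lie in the order `B, d, e, C` on a line, then `C` is hidden from `B` and from `d`. -/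
lemma same_edge_aux {G : Finset (ℝ × ℝ)} (hG : NoDark G) (hW : ∀ q ∈ G, 0 ≤ q.1 ∧ 0 ≤ q.2)
    {A B C d e : ℝ × ℝ} (hB : B ∈ G) (hC : C ∈ G) (hd : d ∈ G) (he : e ∈ G)
    {b₁ c₁ b₂ c₂ : ℝ} (h₁ : Bary A B C d 0 b₁ c₁) (h₂ : Bary A B C e 0 b₂ c₂)
    (hdB : d ≠ B) (heC : e ≠ C) (hde : e ≠ d) (hlt : c₁ < c₂) : False := by
  obtain ⟨-, p1, q1, s1, x1, y1⟩ := h₁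
  obtain ⟨-, p2, q2, s2, x2, y2⟩ := h₂
  obtain rfl : b₁ = 1 - c₁ := by linarith
  obtain rfl : b₂ = 1 - c₂ := by linarith
  have hc1 : 0 < c₁ := by
    refine lt_of_le_of_ne q1 fun h => hdB ?_
    subst h
    exact Prod.ext (by linarith) (by linarith)
  have hc2 : c₂ < 1 := by
    refine lt_of_le_of_ne (by linarith) fun h => heC ?_
    subst h
    exact Prod.ext (by linarith) (by linarith)
  have hcc : c₂ - c₁ ≠ 0 := by linarith
  have X1 : d.1 + (1 / c₁ - 1) * (d.1 - B.1) = C.1 := by rw [x1]; field_simp; ring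
  have X2 : d.2 + (1 / c₁ - 1) * (d.2 - B.2) = C.2 := by rw [y1]; field_simp; ring
  have Y1 : e.1 + ((1 - c₂) / (c₂ - c₁)) * (e.1 - d.1) = C.1 := by
    rw [x1, x2]; field_simp; ring
  have Y2 : e.2 + ((1 - c₂) / (c₂ - c₁)) * (e.2 - d.2) = C.2 := by
    rw [y1, y2]; field_simp; ring
  refine hG B hB d hd d hd e he (1 / c₁ - 1) ((1 - c₂) / (c₂ - c₁)) hdB hde hdB.symm ?_ ?_
    (X1.trans Y1.symm) (X2.trans Y2.symm) (X1 ▸ (hW C hC).1) (X2 ▸ (hW C hC).2)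
  · rw [sub_pos, lt_div_iff₀ hc1]; linarith
  · exact div_pos (by linarith) (by linarith)

lemma same_edge {G : Finset (ℝ × ℝ)} (hG : NoDark G) (hW : ∀ q ∈ G, 0 ≤ q.1 ∧ 0 ≤ q.2)
    {A B C d e : ℝ × ℝ} (hB : B ∈ G) (hC : C ∈ G) (hd : d ∈ G) (he : e ∈ G)
    {b₁ c₁ b₂ c₂ : ℝ} (h₁ : Bary A B C d 0 b₁ c₁) (h₂ : Bary A B C e 0 b₂ c₂)
    (hdB : d ≠ B) (hdC : d ≠ C) (heB : e ≠ B) (heC : e ≠ C) (hde : d ≠ e) : False := by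
  rcases lt_trichotomy c₁ c₂ with h | h | h
  · exact same_edge_aux hG hW hB hC hd he h₁ h₂ hdB heC hde.symm h
  · obtain ⟨-, p1, q1, s1, x1, y1⟩ := h₁
    obtain ⟨-, p2, q2, s2, x2, y2⟩ := h₂
    subst h
    obtain rfl : b₁ = b₂ := by linarith
    exact hde (Prod.ext (by linarith) (by linarith))
  · exact same_edge_aux hG hW hB hC he hd h₂ h₁ heB hdC hde h

/-- With guards `d` on the edge `B C` and `e` on the edge `A C`, the vertex `C` is hidden from `B`
and from `A`. -/
lemma diff_edge {G : Finset (ℝ × ℝ)} (hG : NoDark G) (hW : ∀ q ∈ G, 0 ≤ q.1 ∧ 0 ≤ q.2)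
    {A B C d e : ℝ × ℝ} (hA : A ∈ G) (hB : B ∈ G) (hC : C ∈ G) (hd : d ∈ G) (he : e ∈ G)
    {b₁ c₁ a₂ c₂ : ℝ} (h₁ : Bary A B C d 0 b₁ c₁) (h₂ : Bary A B C e a₂ 0 c₂)
    (hAB : A ≠ B) (hdB : d ≠ B) (hdC : d ≠ C) (heA : e ≠ A) (heC : e ≠ C) : False := by
  obtain ⟨-, p1, q1, s1, x1, y1⟩ := h₁
  obtain ⟨p2, -, q2, s2, x2, y2⟩ := h₂
  obtain rfl : b₁ = 1 - c₁ := by linarith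
  obtain rfl : a₂ = 1 - c₂ := by linarith
  have hc1 : 0 < c₁ := by
    refine lt_of_le_of_ne q1 fun h => hdB ?_
    subst h
    exact Prod.ext (by linarith) (by linarith)
  have hc2 : 0 < c₂ := by
    refine lt_of_le_of_ne q2 fun h => heA ?_
    subst h
    exact Prod.ext (by linarith) (by linarith)
  have hc1' : c₁ < 1 := by
    refine lt_of_le_of_ne (by linarith) fun h => hdC ?_
    subst h
    exact Prod.ext (by linarith) (by linarith)
  have hc2' : c₂ < 1 := by
    refine lt_of_le_of_ne (by linarith) fun h => heC ?_
    subst h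
    exact Prod.ext (by linarith) (by linarith)
  have X1 : d.1 + (1 / c₁ - 1) * (d.1 - B.1) = C.1 := by rw [x1]; field_simp; ring
  have X2 : d.2 + (1 / c₁ - 1) * (d.2 - B.2) = C.2 := by rw [y1]; field_simp; ring
  have Y1 : e.1 + (1 / c₂ - 1) * (e.1 - A.1) = C.1 := by rw [x2]; field_simp; ring
  have Y2 : e.2 + (1 / c₂ - 1) * (e.2 - A.2) = C.2 := by rw [y2]; field_simp; ring
  refine hG B hB d hd A hA e he (1 / c₁ - 1) (1 / c₂ - 1) hdB heA hAB.symm ?_ ?_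
    (X1.trans Y1.symm) (X2.trans Y2.symm) (X1 ▸ (hW C hC).1) (X2 ▸ (hW C hC).2)
  · rw [sub_pos, lt_div_iff₀ hc1]; linarith
  · rw [sub_pos, lt_div_iff₀ hc2]; linarith

/-- With `d` on the edge `B C` and `e` inside the triangle, the ray from `A` through `e` ends at the
point `(b₂ B + c₂ C) / (b₂ + c₂)` of that edge. If `d` is closer to `B` than this point, the point is
hidden from `A` and from `B`. -/
lemma edge_int_aux {G : Finset (ℝ × ℝ)} (hG : NoDark G) (hW : ∀ q ∈ G, 0 ≤ q.1 ∧ 0 ≤ q.2)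
    {A B C d e : ℝ × ℝ} (hA : A ∈ G) (hB : B ∈ G) (hC : C ∈ G) (hd : d ∈ G) (he : e ∈ G)
    {b₁ c₁ a₂ b₂ c₂ : ℝ} (h₁ : Bary A B C d 0 b₁ c₁) (h₂ : Bary A B C e a₂ b₂ c₂)
    (hAB : A ≠ B) (hdB : d ≠ B) (heA : e ≠ A)
    (hc1 : 0 < c₁) (ha2 : 0 < a₂) (hb2 : 0 < b₂) (hc2 : 0 < c₂)
    (hlt : c₁ * b₂ < c₂ * b₁) : False := by
  obtain ⟨-, p1, q1, s1, x1, y1⟩ := h₁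
  obtain ⟨-, -, -, s2, x2, y2⟩ := h₂
  obtain rfl : b₁ = 1 - c₁ := by linarith
  obtain rfl : a₂ = 1 - b₂ - c₂ := by linarith
  have X1 : d.1 + (c₂ / ((b₂ + c₂) * c₁) - 1) * (d.1 - B.1)
      = (b₂ * B.1 + c₂ * C.1) / (b₂ + c₂) := by rw [x1]; field_simp; ring
  have X2 : d.2 + (c₂ / ((b₂ + c₂) * c₁) - 1) * (d.2 - B.2)
      = (b₂ * B.2 + c₂ * C.2) / (b₂ + c₂) := by rw [y1]; field_simp; ring
  have Y1 : e.1 + ((1 - b₂ - c₂) / (b₂ + c₂)) * (e.1 - A.1)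
      = (b₂ * B.1 + c₂ * C.1) / (b₂ + c₂) := by rw [x2]; field_simp; ring
  have Y2 : e.2 + ((1 - b₂ - c₂) / (b₂ + c₂)) * (e.2 - A.2)
      = (b₂ * B.2 + c₂ * C.2) / (b₂ + c₂) := by rw [y2]; field_simp; ring
  obtain ⟨uB, vB⟩ := hW B hB
  obtain ⟨uC, vC⟩ := hW C hC
  refine hG B hB d hd A hA e he _ _ hdB heA hAB.symm ?_ (by positivity)
    (X1.trans Y1.symm) (X2.trans Y2.symm) (by rw [X1]; positivity) (by rw [X2]; positivity)
  rw [sub_pos, lt_div_iff₀ (by positivity)]; linarith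

/-- The triangle `A B C` cannot have a guard `d` inside the edge `B C` and a guard `e` in its
interior. -/
lemma edge_int {G : Finset (ℝ × ℝ)} (hG : NoDark G) (hW : ∀ q ∈ G, 0 ≤ q.1 ∧ 0 ≤ q.2)
    {A B C d e : ℝ × ℝ} (hA : A ∈ G) (hB : B ∈ G) (hC : C ∈ G) (hd : d ∈ G) (he : e ∈ G)
    {b₁ c₁ a₂ b₂ c₂ : ℝ} (h₁ : Bary A B C d 0 b₁ c₁) (h₂ : Bary A B C e a₂ b₂ c₂)
    (hAB : A ≠ B) (hAC : A ≠ C) (hBC : B ≠ C) (hdA : d ≠ A) (hdB : d ≠ B) (hdC : d ≠ C)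
    (heA : e ≠ A)
    (hb1 : 0 < b₁) (hc1 : 0 < c₁) (ha2 : 0 < a₂) (hb2 : 0 < b₂) (hc2 : 0 < c₂) : False := by
  rcases lt_trichotomy (c₁ * b₂) (c₂ * b₁) with h | h | h
  · exact edge_int_aux hG hW hA hB hC hd he h₁ h₂ hAB hdB heA hc1 ha2 hb2 hc2 h
  · obtain ⟨-, p1, q1, s1, x1, y1⟩ := h₁
    obtain ⟨-, -, -, s2, x2, y2⟩ := h₂
    obtain rfl : b₁ = 1 - c₁ := by linarith
    have hc : c₂ = (b₂ + c₂) * c₁ := by linarith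
    have hb : b₂ = (b₂ + c₂) * (1 - c₁) := by linarith
    have ha : a₂ = 1 - (b₂ + c₂) := by linarith
    -- Here `e` is on the segment `A d`: as a middle guard of `B, d, C`, the guard `d` is in the open
    -- quadrant, and as an end guard of `A, e, d` it is on an axis.
    have k1 := three hG hW hB hd hC hBC hc1 (by linarith) (by linarith) (by linarith)
    have k2 := three hG hW hA he hd hdA.symm (l := b₂ + c₂) (by linarith) (by linarith)
      (by rw [x2, x1]; linear_combination A.1 * ha + B.1 * hb + C.1 * hc)
      (by rw [y2, y1]; linear_combination A.2 * ha + B.2 * hb + C.2 * hc)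
    rcases k2.1 with h | h <;> linarith [k1.2.1, k1.2.2]
  · exact edge_int_aux hG hW hA hC hB hd he h₁.swap h₂.swap hAC hdC heA hb1 ha2 hc2 hb2
      (by linarith)

/-- The line from `A` through `d` meets the line from `B` through `e` at the point with barycentric
coordinates proportional to `a₂ c₁ : b₁ c₂ : c₁ c₂`. The last two hypotheses say that this point lies
beyond `d` and beyond `e`; it is then hidden from `A` and from `B`. -/
lemma int_cross {G : Finset (ℝ × ℝ)} (hG : NoDark G) (hW : ∀ q ∈ G, 0 ≤ q.1 ∧ 0 ≤ q.2)
    {A B C d e : ℝ × ℝ} (hA : A ∈ G) (hB : B ∈ G) (hC : C ∈ G) (hd : d ∈ G) (he : e ∈ G)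
    {a₁ b₁ c₁ a₂ b₂ c₂ : ℝ} (h₁ : Bary A B C d a₁ b₁ c₁) (h₂ : Bary A B C e a₂ b₂ c₂)
    (hAB : A ≠ B) (hdA : d ≠ A) (heB : e ≠ B)
    (hb1 : 0 < b₁) (hc1 : 0 < c₁) (ha2 : 0 < a₂) (hc2 : 0 < c₂)
    (hP : a₂ * c₁ < a₁ * c₂) (hQ : b₁ * c₂ < b₂ * c₁) : False := by
  obtain ⟨-, -, -, s1, x1, y1⟩ := h₁
  obtain ⟨-, -, -, s2, x2, y2⟩ := h₂
  obtain rfl : a₁ = 1 - b₁ - c₁ := by linarith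
  obtain rfl : b₂ = 1 - a₂ - c₂ := by linarith
  obtain ⟨S, hS⟩ : ∃ S, S = a₂ * c₁ + b₁ * c₂ + c₁ * c₂ := ⟨_, rfl⟩
  have hS0 : 0 < S := by rw [hS]; positivity
  have X : ∀ a b c : ℝ, ((1 - b₁ - c₁) * a + b₁ * b + c₁ * c) + (c₂ / S - 1) *
      (((1 - b₁ - c₁) * a + b₁ * b + c₁ * c) - a)
      = (a₂ * c₁ * a + b₁ * c₂ * b + c₁ * c₂ * c) / S := by
    intro a b c; field_simp; rw [hS]; ring
  have Y : ∀ a b c : ℝ, (a₂ * a + (1 - a₂ - c₂) * b + c₂ * c) + (c₁ / S - 1) *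
      ((a₂ * a + (1 - a₂ - c₂) * b + c₂ * c) - b)
      = (a₂ * c₁ * a + b₁ * c₂ * b + c₁ * c₂ * c) / S := by
    intro a b c; field_simp; rw [hS]; ring
  obtain ⟨uA, vA⟩ := hW A hA
  obtain ⟨uB, vB⟩ := hW B hB
  obtain ⟨uC, vC⟩ := hW C hC
  refine hG A hA d hd B hB e he (c₂ / S - 1) (c₁ / S - 1) hdA heB hAB ?_ ?_
    (by rw [x1, x2, X, Y]) (by rw [y1, y2, X, Y]) (by rw [x1, X]; positivity)
    (by rw [y1, X]; positivity)
  · rw [sub_pos, lt_div_iff₀ hS0]; linarith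
  · rw [sub_pos, lt_div_iff₀ hS0]; linarith

/-- The case in which `B`, `d`, `e` lie in this order on a line: by `blocked_end`, `e` is on an axis
and `B` is not, although `e` is a convex combination with positive weight at `B`. -/
lemma int_line_aux {G : Finset (ℝ × ℝ)} (hG : NoDark G) (hW : ∀ q ∈ G, 0 ≤ q.1 ∧ 0 ≤ q.2)
    {A B C d e : ℝ × ℝ} (hA : A ∈ G) (hB : B ∈ G) (hC : C ∈ G) (hd : d ∈ G) (he : e ∈ G)
    {a₁ b₁ c₁ a₂ b₂ c₂ : ℝ} (h₁ : Bary A B C d a₁ b₁ c₁) (h₂ : Bary A B C e a₂ b₂ c₂)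
    (heB : e ≠ B) (hc1 : 0 < c₁) (hb2 : 0 < b₂) (hc2 : 0 < c₂)
    (hP : a₁ * c₂ = a₂ * c₁) (hQ : b₂ * c₁ < b₁ * c₂) : False := by
  obtain ⟨-, -, -, s1, x1, y1⟩ := h₁
  obtain ⟨ha2, -, -, s2, x2, y2⟩ := h₂
  have hlt : c₁ < c₂ := by
    have : (a₂ + b₂ + c₂) * c₁ < (a₁ + b₁ + c₁) * c₂ := by linarith
    rwa [s1, s2, one_mul, one_mul] at this
  have ha : a₁ = c₁ / c₂ * a₂ := by field_simp; linarith
  have hc : c₁ = c₁ / c₂ * c₂ := by field_simp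
  have hb : b₁ = 1 - c₁ / c₂ + c₁ / c₂ * b₂ := by
    linear_combination s1 - c₁ / c₂ * s2 - ha - hc
  have hl : c₁ / c₂ < 1 := by rwa [div_lt_one hc2]
  have hl0 : 0 < c₁ / c₂ := by positivity
  have k := blocked_end hG hW hB hd he heB.symm hl0 hl
    (by rw [x1, x2]; linear_combination A.1 * ha + B.1 * hb + C.1 * hc)
    (by rw [y1, y2]; linear_combination A.2 * ha + B.2 * hb + C.2 * hc)
  obtain ⟨uA, vA⟩ := hW A hA
  obtain ⟨uC, vC⟩ := hW C hC
  rcases k with ⟨k1, k2⟩ | ⟨k1, k2⟩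
  · have := mul_pos hb2 k2
    have := mul_nonneg ha2 uA
    have := mul_nonneg hc2.le uC
    linarith
  · have := mul_pos hb2 k2
    have := mul_nonneg ha2 vA
    have := mul_nonneg hc2.le vC
    linarith

/-- Two guards `d`, `e` with `a₁ : c₁ = a₂ : c₂`, that is, on one line with the vertex `B`, are
impossible. -/
lemma int_line {G : Finset (ℝ × ℝ)} (hG : NoDark G) (hW : ∀ q ∈ G, 0 ≤ q.1 ∧ 0 ≤ q.2)
    {A B C d e : ℝ × ℝ} (hA : A ∈ G) (hB : B ∈ G) (hC : C ∈ G) (hd : d ∈ G) (he : e ∈ G)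
    {a₁ b₁ c₁ a₂ b₂ c₂ : ℝ} (h₁ : Bary A B C d a₁ b₁ c₁) (h₂ : Bary A B C e a₂ b₂ c₂)
    (hde : d ≠ e) (hdB : d ≠ B) (heB : e ≠ B) (hb1 : 0 < b₁) (hc1 : 0 < c₁) (hb2 : 0 < b₂)
    (hc2 : 0 < c₂) (hP : a₁ * c₂ = a₂ * c₁) : False := by
  rcases lt_trichotomy (b₂ * c₁) (b₁ * c₂) with h | h | h
  · exact int_line_aux hG hW hA hB hC hd he h₁ h₂ heB hc1 hb2 hc2 hP h
  · obtain ⟨-, -, -, s1, x1, y1⟩ := h₁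
    obtain ⟨-, -, -, s2, x2, y2⟩ := h₂
    have hc : c₁ = c₂ := by linear_combination c₂ * s1 - c₁ * s2 - hP + h
    subst hc
    obtain rfl := mul_right_cancel₀ hc1.ne' hP
    obtain rfl := mul_right_cancel₀ hc1.ne' h
    exact hde (Prod.ext (by linarith) (by linarith))
  · exact int_line_aux hG hW hA hB hC he hd h₂ h₁ hdB hc2 hb1 hc1 hP.symm h

/-- Two interior guards `d`, `e`. By `int_line` the ratios `a₁ / a₂`, `b₁ / b₂`, `c₁ / c₂` are pairwise
distinct. The ray through `d` from the vertex with the largest ratio and the ray through `e` from the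
vertex with the smallest ratio then cross beyond `d` and `e`, and `int_cross` applies. -/
lemma int_int {G : Finset (ℝ × ℝ)} (hG : NoDark G) (hW : ∀ q ∈ G, 0 ≤ q.1 ∧ 0 ≤ q.2)
    {A B C d e : ℝ × ℝ} (hA : A ∈ G) (hB : B ∈ G) (hC : C ∈ G) (hd : d ∈ G) (he : e ∈ G)
    {a₁ b₁ c₁ a₂ b₂ c₂ : ℝ} (h₁ : Bary A B C d a₁ b₁ c₁) (h₂ : Bary A B C e a₂ b₂ c₂)
    (hAB : A ≠ B) (hAC : A ≠ C) (hBC : B ≠ C) (hde : d ≠ e)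
    (hdA : d ≠ A) (hdB : d ≠ B) (hdC : d ≠ C) (heA : e ≠ A) (heB : e ≠ B) (heC : e ≠ C)
    (ha1 : 0 < a₁) (hb1 : 0 < b₁) (hc1 : 0 < c₁) (ha2 : 0 < a₂) (hb2 : 0 < b₂) (hc2 : 0 < c₂) :
    False := by
  have hP : a₁ * c₂ ≠ a₂ * c₁ :=
    int_line hG hW hA hB hC hd he h₁ h₂ hde hdB heB hb1 hc1 hb2 hc2
  have hR : b₁ * a₂ ≠ b₂ * a₁ :=
    int_line hG hW hB hC hA hd he h₁.rot h₂.rot hde hdC heC hc1 ha1 hc2 ha2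
  have hQ : c₁ * b₂ ≠ c₂ * b₁ :=
    int_line hG hW hC hA hB hd he h₁.rot.rot h₂.rot.rot hde hdA heA ha1 hb1 ha2 hb2
  have t1 := int_cross hG hW hA hB hC hd he h₁ h₂ hAB hdA heB hb1 hc1 ha2 hc2
  have t2 := int_cross hG hW hA hB hC he hd h₂ h₁ hAB heA hdB hb2 hc2 ha1 hc1
  have t3 := int_cross hG hW hB hC hA hd he h₁.rot h₂.rot hBC hdB heC hc1 ha1 hb2 ha2
  have t4 := int_cross hG hW hB hC hA he hd h₂.rot h₁.rot hBC heB hdC hc2 ha2 hb1 ha1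
  have t5 := int_cross hG hW hC hA hB hd he h₁.rot.rot h₂.rot.rot hAC.symm hdC heA ha1 hb1 hc2 hb2
  have t6 := int_cross hG hW hC hA hB he hd h₂.rot.rot h₁.rot.rot hAC.symm heC hdA ha2 hb2 hc1 hb1
  rcases lt_or_gt_of_ne hP with p | p <;> rcases lt_or_gt_of_ne hQ with q | q <;>
    rcases lt_or_gt_of_ne hR with r | r <;>
    first
      | exact t1 (by linarith) (by linarith)
      | exact t2 (by linarith) (by linarith)
      | exact t3 (by linarith) (by linarith)
      | exact t4 (by linarith) (by linarith)
      | exact t5 (by linarith) (by linarith)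
      | exact t6 (by linarith) (by linarith)

lemma Bary.pos {A B C d : ℝ × ℝ} {b c : ℝ} (h : Bary A B C d 0 b c) (hB : d ≠ B) (hC : d ≠ C) :
    0 < b ∧ 0 < c := by
  obtain ⟨-, p1, q1, s1, x1, y1⟩ := h
  constructor
  · refine lt_of_le_of_ne p1 fun h => hC ?_
    subst h
    obtain rfl : c = 1 := by linarith
    exact Prod.ext (by linarith) (by linarith)
  · refine lt_of_le_of_ne q1 fun h => hB ?_
    subst h
    obtain rfl : b = 1 := by linarith
    exact Prod.ext (by linarith) (by linarith)

/-- A triangle with a guard on its edge `B C` contains no other guard, vertices apart. -/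
lemma edge_any {G : Finset (ℝ × ℝ)} (hG : NoDark G) (hW : ∀ q ∈ G, 0 ≤ q.1 ∧ 0 ≤ q.2)
    {A B C d e : ℝ × ℝ} (hA : A ∈ G) (hB : B ∈ G) (hC : C ∈ G) (hd : d ∈ G) (he : e ∈ G)
    {b₁ c₁ a₂ b₂ c₂ : ℝ} (h₁ : Bary A B C d 0 b₁ c₁) (h₂ : Bary A B C e a₂ b₂ c₂)
    (hAB : A ≠ B) (hAC : A ≠ C) (hBC : B ≠ C) (hde : d ≠ e)
    (hdA : d ≠ A) (hdB : d ≠ B) (hdC : d ≠ C) (heA : e ≠ A) (heB : e ≠ B) (heC : e ≠ C) :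
    False := by
  have hp := h₁.pos hdB hdC
  rcases h₂.1.eq_or_lt with rfl | ha
  · exact same_edge hG hW hB hC hd he h₁ h₂ hdB hdC heB heC hde
  rcases h₂.2.1.eq_or_lt with rfl | hb
  · exact diff_edge hG hW hA hB hC hd he h₁ h₂ hAB hdB hdC heA heC
  rcases h₂.2.2.1.eq_or_lt with rfl | hc
  · exact diff_edge hG hW hA hC hB hd he h₁.swap h₂.swap hAC hdC hdB heA heB
  exact edge_int hG hW hA hB hC hd he h₁ h₂ hAB hAC hBC hdA hdB hdC heA hp.1 hp.2 ha hb hc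

/-- A closed triangle whose vertices are guards contains at most one further guard. -/
lemma triangle {G : Finset (ℝ × ℝ)} (hG : NoDark G) (hW : ∀ q ∈ G, 0 ≤ q.1 ∧ 0 ≤ q.2)
    {A B C d e : ℝ × ℝ} (hA : A ∈ G) (hB : B ∈ G) (hC : C ∈ G) (hd : d ∈ G) (he : e ∈ G)
    {a₁ b₁ c₁ a₂ b₂ c₂ : ℝ} (h₁ : Bary A B C d a₁ b₁ c₁) (h₂ : Bary A B C e a₂ b₂ c₂)
    (hAB : A ≠ B) (hAC : A ≠ C) (hBC : B ≠ C) (hde : d ≠ e)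
    (hdA : d ≠ A) (hdB : d ≠ B) (hdC : d ≠ C) (heA : e ≠ A) (heB : e ≠ B) (heC : e ≠ C) :
    False := by
  rcases h₁.1.eq_or_lt with rfl | ha
  · exact edge_any hG hW hA hB hC hd he h₁ h₂ hAB hAC hBC hde hdA hdB hdC heA heB heC
  rcases h₁.2.1.eq_or_lt with rfl | hb
  · exact edge_any hG hW hB hC hA hd he h₁.rot h₂.rot hBC hAB.symm hAC.symm hde hdB hdC hdA
      heB heC heA
  rcases h₁.2.2.1.eq_or_lt with rfl | hc
  · exact edge_any hG hW hC hA hB hd he h₁.rot.rot h₂.rot.rot hAC.symm hBC.symm hAB hde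
      hdC hdA hdB heC heA heB
  rcases h₂.1.eq_or_lt with rfl | ha'
  · exact edge_any hG hW hA hB hC he hd h₂ h₁ hAB hAC hBC hde.symm heA heB heC hdA hdB hdC
  rcases h₂.2.1.eq_or_lt with rfl | hb'
  · exact edge_any hG hW hB hC hA he hd h₂.rot h₁.rot hBC hAB.symm hAC.symm hde.symm heB heC heA
      hdB hdC hdA
  rcases h₂.2.2.1.eq_or_lt with rfl | hc'
  · exact edge_any hG hW hC hA hB he hd h₂.rot.rot h₁.rot.rot hAC.symm hBC.symm hAB hde.symm
      heC heA heB hdC hdA hdB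
  exact int_int hG hW hA hB hC hd he h₁ h₂ hAB hAC hBC hde hdA hdB hdC heA heB heC
    ha hb hc ha' hb' hc'

/-! ### Convex hulls of finite sets -/

lemma Bary.mem_hull {A B C d : ℝ × ℝ} {a b c : ℝ} (h : Bary A B C d a b c) {s : Set (ℝ × ℝ)}
    (hA : A ∈ s) (hB : B ∈ s) (hC : C ∈ s) : d ∈ convexHull ℝ s := by
  obtain ⟨ha, hb, hc, hs, x, y⟩ := h
  have hd : d = a • A + b • B + c • C := by
    ext
    · simpa using x
    · simpa using y
  have := (convex_convexHull ℝ s).sum_mem (t := Finset.univ) (w := ![a, b, c]) (z := ![A, B, C])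
    (by intro i _; fin_cases i <;> simpa) (by simpa [Fin.sum_univ_three] using hs)
    (by intro i _; fin_cases i <;> exact subset_convexHull ℝ s (by simpa))
  simpa [Fin.sum_univ_three, hd] using this

lemma cr_hull {x y p : ℝ × ℝ} {s : Set (ℝ × ℝ)} (h : ∀ v ∈ s, 0 ≤ cr x y v)
    (hp : p ∈ convexHull ℝ s) : 0 ≤ cr x y p := by
  have hc : Convex ℝ {q | 0 ≤ cr x y q} := by
    intro q hq r hr a b ha hb hab
    have e : cr x y (a • q + b • r) = a * cr x y q + b * cr x y r := by
      obtain rfl : a = 1 - b := by linarith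
      simp only [cr, Prod.fst_add, Prod.snd_add, Prod.smul_fst, Prod.smul_snd, smul_eq_mul]
      ring
    change 0 ≤ cr x y _
    rw [e]
    exact add_nonneg (mul_nonneg ha hq) (mul_nonneg hb hr)
  exact convexHull_min (t := {q | 0 ≤ cr x y q}) h hc hp

/-- A finite set in convex position has a counterclockwise enumeration. The vertices other than a
fixed vertex `u` lie in an open half-plane bounded by a line through `u`, and are sorted by the slope
at which they are seen from `u`. -/
lemma polygon (V : Finset (ℝ × ℝ)) (hV : ∀ v ∈ V, v ∉ convexHull ℝ (V.erase v : Set (ℝ × ℝ)))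
    (hne : V.Nonempty) : ∃ f : ℕ → ℝ × ℝ, (∀ i < V.card, f i ∈ V) ∧
      (∀ v ∈ V, ∃ i < V.card, f i = v) ∧
      ∀ i j k, i < j → j < k → k < V.card → 0 < cr (f i) (f j) (f k) := by
  classical
  obtain ⟨u, hu⟩ := hne
  obtain ⟨φ, c, hc1, hc2⟩ := geometric_hahn_banach_point_closed (convex_convexHull ℝ _)
    ((V.erase u).finite_toSet.isClosed_convexHull ℝ) (hV u hu)
  obtain ⟨α, hα⟩ : ∃ α, α = φ (1, 0) := ⟨_, rfl⟩
  obtain ⟨β, hβ⟩ : ∃ β, β = φ (0, 1) := ⟨_, rfl⟩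
  have hφ : ∀ p : ℝ × ℝ, φ p = α * p.1 + β * p.2 := by
    intro p
    have : p = p.1 • ((1, 0) : ℝ × ℝ) + p.2 • ((0, 1) : ℝ × ℝ) := by ext <;> simp
    conv_lhs => rw [this]
    rw [map_add, map_smul, map_smul, hα, hβ]
    simp [mul_comm]
  -- In the orthogonal frame at `u` with axes along `(α, β)` and `(-β, α)`, the point `w` has
  -- coordinates `F w`, `N w` up to a common factor; `σ w` is its slope.
  set T := V.erase u with hT
  let F : ℝ × ℝ → ℝ := fun w => α * (w.1 - u.1) + β * (w.2 - u.2)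
  let N : ℝ × ℝ → ℝ := fun w => -β * (w.1 - u.1) + α * (w.2 - u.2)
  let σ : ℝ × ℝ → ℝ := fun w => N w / F w
  have hF : ∀ w ∈ T, 0 < F w := by
    intro w hw
    have h1 := hc2 w (subset_convexHull ℝ _ (by exact_mod_cast hw))
    rw [hφ] at h1 hc1
    simp only [F]; linarith
  have hN : ∀ w ∈ T, N w = σ w * F w := fun w hw => by
    have := (hF w hw).ne'
    simp only [σ]; field_simp
  have hK : ∀ w ∈ T, 0 < α ^ 2 + β ^ 2 := by
    intro w hw
    have h := hF w hw
    by_contra! hcon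
    have h1 : α = 0 := by nlinarith [sq_nonneg α, sq_nonneg β]
    have h2 : β = 0 := by nlinarith [sq_nonneg α, sq_nonneg β]
    simp [F, h1, h2] at h
  have hcr : ∀ w ∈ T, ∀ w' ∈ T, σ w < σ w' → 0 < cr u w w' := by
    intro w hw w' hw' hlt
    have e : (α ^ 2 + β ^ 2) * cr u w w' = F w * N w' - N w * F w' := by
      simp only [F, N, cr]; ring
    have : 0 < (α ^ 2 + β ^ 2) * cr u w w' := by
      rw [e, hN w hw, hN w' hw']
      have := mul_pos (mul_pos (hF w hw) (hF w' hw')) (sub_pos.2 hlt)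
      linarith
    exact (pos_iff_pos_of_mul_pos this).1 (hK w hw)
  -- Of two points seen from `u` at the same slope, the nearer one is in the segment from `u` to the
  -- other.
  have hinj' : ∀ w ∈ T, ∀ w' ∈ T, σ w = σ w' → F w ≤ F w' → w = w' := by
    intro w hw w' hw' hs hle
    by_contra hne
    have hK0 := hK w hw
    have hw0 := hF w hw
    have hw0' := hF w' hw'
    have e1 : w.1 - u.1 = F w / F w' * (w'.1 - u.1) := by
      have h1 : (α ^ 2 + β ^ 2) * (w.1 - u.1) = F w * (α - β * σ w) := by
        have : (α ^ 2 + β ^ 2) * (w.1 - u.1) = α * F w - β * N w := by simp only [F, N]; ring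
        rw [this, hN w hw]; ring
      have h2 : (α ^ 2 + β ^ 2) * (w'.1 - u.1) = F w' * (α - β * σ w) := by
        have : (α ^ 2 + β ^ 2) * (w'.1 - u.1) = α * F w' - β * N w' := by simp only [F, N]; ring
        rw [this, hN w' hw', hs]; ring
      apply mul_left_cancel₀ hK0.ne'
      rw [h1, mul_left_comm, h2]; field_simp
    have e2 : w.2 - u.2 = F w / F w' * (w'.2 - u.2) := by
      have h1 : (α ^ 2 + β ^ 2) * (w.2 - u.2) = F w * (β + α * σ w) := by
        have : (α ^ 2 + β ^ 2) * (w.2 - u.2) = β * F w + α * N w := by simp only [F, N]; ring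
        rw [this, hN w hw]; ring
      have h2 : (α ^ 2 + β ^ 2) * (w'.2 - u.2) = F w' * (β + α * σ w) := by
        have : (α ^ 2 + β ^ 2) * (w'.2 - u.2) = β * F w' + α * N w' := by simp only [F, N]; ring
        rw [this, hN w' hw', hs]; ring
      apply mul_left_cancel₀ hK0.ne'
      rw [h1, mul_left_comm, h2]; field_simp
    have hl : F w / F w' ≤ 1 := by rwa [div_le_one hw0']
    have hB : Bary u w' w' w (1 - F w / F w') (F w / F w') 0 :=
      ⟨by linarith, by positivity, le_rfl, by ring, by linarith, by linarith⟩
    have huw : u ∈ (V.erase w : Set (ℝ × ℝ)) := by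
      simp only [T, Finset.mem_erase] at hw
      simp [hu, hw.1.symm]
    have hww : w' ∈ (V.erase w : Set (ℝ × ℝ)) := by
      simp only [T, Finset.mem_erase] at hw'
      simp [hw'.2, Ne.symm hne]
    exact hV w (Finset.mem_of_mem_erase hw) (hB.mem_hull huw hww hww)
  have hinj : Set.InjOn σ T := by
    intro w hw w' hw' hs
    rcases le_total (F w) (F w') with h | h
    · exact hinj' w hw w' hw' hs h
    · exact (hinj' w' hw' w hw hs.symm h).symm
  have hcard : (T.image σ).card = T.card := Finset.card_image_of_injOn hinj
  have hex : ∀ i : Fin T.card, ∃ w ∈ T, σ w = (T.image σ).orderEmbOfFin hcard i := by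
    intro i
    have := (T.image σ).orderEmbOfFin_mem hcard i
    exact Finset.mem_image.1 this
  choose g hgT hgσ using hex
  have hVT : V.card = T.card + 1 := (Finset.card_erase_add_one hu).symm
  have hmono : ∀ i j, i < j → σ (g i) < σ (g j) := by
    intro i j hij
    rw [hgσ, hgσ]
    exact ((T.image σ).orderEmbOfFin hcard).strictMono hij
  let f : ℕ → ℝ × ℝ := fun n => n.casesOn u fun k => if h : k < T.card then g ⟨k, h⟩ else u
  have hf0 : f 0 = u := rfl
  have hfs : ∀ k (h : k < T.card), f (k + 1) = g ⟨k, h⟩ := fun k h => by simp [f, h]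
  refine ⟨f, ?_, ?_, ?_⟩
  · rintro (_ | i) hi
    · exact hu
    · rw [hfs i (by omega)]; exact Finset.mem_of_mem_erase (hgT _)
  · intro v hv
    by_cases hvu : v = u
    · exact ⟨0, by omega, hvu.symm⟩
    · have hvT : v ∈ T := Finset.mem_erase.2 ⟨hvu, hv⟩
      have h1 : σ v ∈ Set.range ((T.image σ).orderEmbOfFin hcard) := by
        rw [Finset.range_orderEmbOfFin]
        exact_mod_cast Finset.mem_image_of_mem σ hvT
      obtain ⟨i, hi⟩ := h1
      refine ⟨i + 1, by omega, ?_⟩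
      rw [hfs i i.2]
      exact hinj (hgT _) hvT ((hgσ i).trans hi)
  · rintro (_ | i) (_ | j) (_ | k) hij hjk hk
    any_goals omega
    · rw [hf0, hfs j (by omega), hfs k (by omega)]
      exact hcr _ (hgT _) _ (hgT _) (hmono _ _ (by simpa using hjk))
    · rw [hfs i (by omega), hfs j (by omega), hfs k (by omega)]
      have hij' := hmono ⟨i, by omega⟩ ⟨j, by omega⟩ (by simpa using hij)
      have hjk' := hmono ⟨j, by omega⟩ ⟨k, by omega⟩ (by simpa using hjk)
      have ha := hgT ⟨i, by omega⟩
      have hb := hgT ⟨j, by omega⟩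
      have hc := hgT ⟨k, by omega⟩
      generalize g ⟨i, _⟩ = a at *
      generalize g ⟨j, _⟩ = b at *
      generalize g ⟨k, _⟩ = c at *
      have c1 := hcr a ha b hb hij'
      have c2 := hcr b hb c hc hjk'
      have c3 := hcr a ha c hc (hij'.trans hjk')
      -- If `a, b, c` is not a left turn, then `b` is in the triangle `u a c`.
      by_contra! hle
      have e : cr a b c = cr u a b + cr u b c - cr u a c := by unfold cr; ring
      have hB : Bary u a c b (1 - cr u b c / cr u a c - cr u a b / cr u a c)
          (cr u b c / cr u a c) (cr u a b / cr u a c) := by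
        refine ⟨?_, by positivity, by positivity, by ring, ?_, ?_⟩
        · have : cr u b c / cr u a c + cr u a b / cr u a c ≤ 1 := by
            rw [← add_div, div_le_one c3]; linarith
          linarith
        · field_simp; unfold cr; ring
        · field_simp; unfold cr; ring
      have hub : u ∈ (V.erase b : Set (ℝ × ℝ)) := by
        have := Finset.ne_of_mem_erase hb
        simp [hu, this.symm]
      have hab : a ∈ (V.erase b : Set (ℝ × ℝ)) := by
        have : a ≠ b := by rintro rfl; exact lt_irrefl _ hij'
        simp [Finset.mem_of_mem_erase ha, this]
      have hcb : c ∈ (V.erase b : Set (ℝ × ℝ)) := by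
        have : c ≠ b := by rintro rfl; exact lt_irrefl _ hjk'
        simp [Finset.mem_of_mem_erase hc, this]
      exact hV b (Finset.mem_of_mem_erase hb) (hB.mem_hull hub hab hcb)

/-- A convex polygon is covered by the triangles `f 0, f (i - 1), f i`. -/
lemma fan {V : Finset (ℝ × ℝ)} {f : ℕ → ℝ × ℝ} {m : ℕ} (hm : 3 ≤ m)
    (hsurj : ∀ v ∈ V, ∃ i < m, f i = v)
    (hccw : ∀ i j k, i < j → j < k → k < m → 0 < cr (f i) (f j) (f k))
    {p : ℝ × ℝ} (hp : p ∈ convexHull ℝ (V : Set (ℝ × ℝ))) :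
    ∃ i, 2 ≤ i ∧ i < m ∧ ∃ a b c, Bary (f 0) (f (i - 1)) (f i) p a b c := by
  classical
  have hedge : ∀ i, i + 1 < m → 0 ≤ cr (f i) (f (i + 1)) p := by
    intro i hi
    refine cr_hull (fun v hv => ?_) hp
    obtain ⟨j, hj, rfl⟩ := hsurj v hv
    rcases lt_trichotomy j i with h | rfl | h
    · rw [cr_rot]; exact (hccw _ _ _ h (by omega) hi).le
    · simp [cr]
    · rcases (Nat.succ_le_of_lt h).eq_or_lt with h' | h'
      · rw [← h']; apply le_of_eq; simp only [cr, Nat.succ_eq_add_one]; ring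
      · exact (hccw _ _ _ (by omega) h' hj).le
  have hlast : cr (f 0) (f (m - 1)) p ≤ 0 := by
    have : 0 ≤ cr (f (m - 1)) (f 0) p := by
      refine cr_hull (fun v hv => ?_) hp
      obtain ⟨j, hj, rfl⟩ := hsurj v hv
      rcases Nat.eq_zero_or_pos j with rfl | h
      · apply le_of_eq; unfold cr; ring
      · rcases (Nat.le_sub_one_of_lt hj).eq_or_lt with rfl | h'
        · simp [cr]
        · rw [← cr_rot, cr_rot, cr_rot]
          have := (hccw _ _ _ h h' (by omega)).le
          rwa [← cr_rot] at this
    unfold cr at *; linarith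
  -- The triangle is given by the first diagonal (or last edge) at `f 0` having `p` on or to its right.
  have hex : ∃ i, 2 ≤ i ∧ cr (f 0) (f i) p ≤ 0 := ⟨m - 1, by omega, hlast⟩
  obtain ⟨h2, hle⟩ := Nat.find_spec hex
  have him : Nat.find hex ≤ m - 1 := Nat.find_min' hex ⟨by omega, hlast⟩
  have hmin := fun k => Nat.find_min hex (m := k)
  generalize Nat.find hex = i at *
  have hprev : 0 ≤ cr (f 0) (f (i - 1)) p := by
    rcases h2.eq_or_lt with rfl | h
    · exact hedge 0 (by omega)
    · by_contra! hcon
      exact hmin (i - 1) (by omega) ⟨by omega, hcon.le⟩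
  have hmid := hedge (i - 1) (by omega)
  rw [Nat.sub_add_cancel (by omega)] at hmid
  have hpos := hccw 0 (i - 1) i (by omega) (by omega) (by omega)
  refine ⟨i, h2, by omega, cr (f (i - 1)) (f i) p / cr (f 0) (f (i - 1)) (f i),
    - cr (f 0) (f i) p / cr (f 0) (f (i - 1)) (f i),
    cr (f 0) (f (i - 1)) p / cr (f 0) (f (i - 1)) (f i), by positivity,
    div_nonneg (by linarith) hpos.le, by positivity, ?_, ?_, ?_⟩
  · field_simp; unfold cr; ring
  · field_simp; unfold cr; ring
  · field_simp; unfold cr; ring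

/-- A finite set is contained in the convex hull of some subset that is in convex position. -/
lemma exists_min_hull (G : Finset (ℝ × ℝ)) : ∃ V ⊆ G,
    (G : Set (ℝ × ℝ)) ⊆ convexHull ℝ (V : Set (ℝ × ℝ)) ∧
      ∀ v ∈ V, v ∉ convexHull ℝ (V.erase v : Set (ℝ × ℝ)) := by
  classical
  obtain ⟨V, hV, hmin⟩ := Finset.exists_min_image
    ((G.powerset : Finset (Finset (ℝ × ℝ))).filter fun V : Finset (ℝ × ℝ) =>
      (G : Set (ℝ × ℝ)) ⊆ convexHull ℝ (V : Set (ℝ × ℝ))) Finset.card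
    ⟨G, by simpa using subset_convexHull ℝ _⟩
  simp only [Finset.mem_filter, Finset.mem_powerset] at hV hmin
  refine ⟨V, hV.1, hV.2, fun v hv hmem => ?_⟩
  have hsub : (V : Set (ℝ × ℝ)) ⊆ convexHull ℝ (V.erase v : Set (ℝ × ℝ)) := by
    intro w hw
    by_cases h : w = v
    · rwa [h]
    · exact subset_convexHull ℝ _ (Finset.mem_coe.2 (Finset.mem_erase.2 ⟨h, hw⟩))
  have := hmin (V.erase v) ⟨(Finset.erase_subset _ _).trans hV.1,
    hV.2.trans (convexHull_min hsub (convex_convexHull ℝ _))⟩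
  have := Finset.card_erase_lt_of_mem hv
  omega

/-! ### Counting guards -/

/-- Let the hull of `G` have `m` vertices. Then `m ≤ 6` by `no_seven`, and the `m - 2` triangles of a
fan contain at most one further guard each, whence `|G| ≤ 2 m - 2 ≤ 10`. For `m ≤ 2` the guards lie
on a segment, which has at most one guard between its ends. -/
lemma quadrant {G : Finset (ℝ × ℝ)} (hG : NoDark G) (hW : ∀ q ∈ G, 0 ≤ q.1 ∧ 0 ≤ q.2) :
    G.card ≤ 10 := by
  classical
  by_contra! hcard
  obtain ⟨V, hVG, hGV, hV⟩ := exists_min_hull G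
  have hne : V.Nonempty := by
    rw [Finset.nonempty_iff_ne_empty]
    rintro rfl
    have : G = ∅ := by simpa using hGV
    simp [this] at hcard
  have hdiff : (G \ V).card + V.card = G.card := Finset.card_sdiff_add_card_eq_card hVG
  have hpos := hne.card_pos
  obtain ⟨f, hfV, hsurj, hccw⟩ := polygon V hV hne
  rcases le_or_gt 7 V.card with h7 | h7
  · exact no_seven hG hW (p := fun i => f i) (fun i j k hij hjk => hccw _ _ _ hij hjk (by omega))
      fun i => hVG (hfV _ (by omega))
  rcases le_or_gt 3 V.card with h3 | h3
  · have hfan : ∀ p ∈ G \ V, ∃ i, 2 ≤ i ∧ i < V.card ∧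
        ∃ a b c, Bary (f 0) (f (i - 1)) (f i) p a b c := fun p hp =>
      fan h3 hsurj hccw (hGV (Finset.mem_sdiff.1 hp).1)
    choose! F hF2 hFm hF using hfan
    -- Two guards other than hull vertices share a triangle, as `|G| - m ≥ 11 - m > m - 2`.
    obtain ⟨d, hd, e, he, hde, hFde⟩ := Finset.exists_ne_map_eq_of_card_lt_of_maps_to
      (s := G \ V) (t := Finset.Ico 2 V.card) (f := F) (by rw [Nat.card_Ico]; omega)
      (fun p hp => Finset.mem_coe.2 (Finset.mem_Ico.2 ⟨hF2 p hp, hFm p hp⟩))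
    obtain ⟨a₁, b₁, c₁, h₁⟩ := hF d hd
    obtain ⟨a₂, b₂, c₂, h₂⟩ := hF e he
    rw [← hFde] at h₂
    have i2 := hF2 d hd
    have im := hFm d hd
    generalize F d = i at *
    have hpos := hccw 0 (i - 1) i (by omega) (by omega) im
    have m0 := hfV 0 (by omega)
    have m1 := hfV (i - 1) (by omega)
    have m2 := hfV i im
    rw [Finset.mem_sdiff] at hd he
    have hn : ∀ {q v}, v ∈ V → q ∉ V → q ≠ v := by
      rintro q v hv hq rfl; exact hq hv
    refine triangle hG hW (hVG m0) (hVG m1) (hVG m2) hd.1 he.1 h₁ h₂ ?_ ?_ ?_ hde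
      (hn m0 hd.2) (hn m1 hd.2) (hn m2 hd.2) (hn m0 he.2) (hn m1 he.2) (hn m2 he.2)
    · intro h; rw [h] at hpos; unfold cr at hpos; linarith
    · intro h; rw [h] at hpos; unfold cr at hpos; linarith
    · intro h; rw [h] at hpos; unfold cr at hpos; linarith
  · obtain ⟨x, y, hxy⟩ : ∃ x y, V = {x, y} := by
      rcases (show V.card = 1 ∨ V.card = 2 by omega) with h | h
      · obtain ⟨x, rfl⟩ := Finset.card_eq_one.1 h
        exact ⟨x, x, by simp⟩
      · obtain ⟨x, y, -, rfl⟩ := Finset.card_eq_two.1 h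
        exact ⟨x, y, rfl⟩
    obtain ⟨d, hd, e, he, hde⟩ := Finset.one_lt_card.1 (show 1 < (G \ V).card by omega)
    have hx : x ∈ V := by simp [hxy]
    have hy : y ∈ V := by simp [hxy]
    have hseg : ∀ q ∈ G \ V, ∃ b c, Bary x x y q 0 b c := by
      intro q hq
      have h := hGV (Finset.mem_sdiff.1 hq).1
      rw [hxy, Finset.coe_pair, convexHull_pair] at h
      obtain ⟨b, c, hb, hc, hbc, rfl⟩ := h
      exact ⟨b, c, le_rfl, hb, hc, by linarith, by simp, by simp⟩
    obtain ⟨b₁, c₁, h₁⟩ := hseg d hd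
    obtain ⟨b₂, c₂, h₂⟩ := hseg e he
    rw [Finset.mem_sdiff] at hd he
    have hn : ∀ {q v}, v ∈ V → q ∉ V → q ≠ v := by
      rintro q v hv hq rfl; exact hq hv
    exact same_edge hG hW (hVG hx) (hVG hy) hd.1 he.1 h₁ h₂ (hn hx hd.2) (hn hy hd.2)
      (hn hx he.2) (hn hy he.2) hde

/-- Any placement of at least 11 guards in a wedge creates a point
hidden from two distinct guards (a 2-dark point). -/
theorem statement13 (W : Set Plane) (hW : IsWedge W) (G : Finset Plane)
    (hG : ↑G ⊆ W) (hcard : 11 ≤ G.card) :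
    ∃ x ∈ W, ∃ g ∈ G, ∃ g' ∈ G, g ≠ g' ∧ Hidden G g x ∧ Hidden G g' x := by
  classical
  obtain ⟨a, u, v, hlin, rfl⟩ := hW
  -- Affine coordinates in which the wedge is the first quadrant.
  let Φ : ℝ × ℝ → Plane := fun p => a + p.1 • u + p.2 • v
  have hΦ : Function.Injective Φ := by
    intro p q hpq
    have h : (p.1 - q.1) • u + (p.2 - q.2) • v = 0 := by
      have h' : Φ p - Φ q = 0 := sub_eq_zero.2 hpq
      rw [← h']; simp only [Φ]; module
    obtain ⟨h1, h2⟩ := LinearIndependent.pair_iff.1 hlin _ _ h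
    exact Prod.ext (sub_eq_zero.1 h1) (sub_eq_zero.1 h2)
  let G' : Finset (ℝ × ℝ) := G.preimage Φ hΦ.injOn
  have hG' : ∀ {p}, p ∈ G' ↔ Φ p ∈ G := by simp [G']
  have himg : G'.image Φ = G := by
    ext w
    rw [Finset.mem_image]
    constructor
    · rintro ⟨p, hp, rfl⟩; exact hG'.1 hp
    · intro hw
      obtain ⟨s, t, -, -, rfl⟩ := hG hw
      exact ⟨(s, t), hG'.2 hw, rfl⟩
  have hcard' : G'.card = G.card := by rw [← himg, Finset.card_image_of_injective _ hΦ]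
  have hpos : ∀ q ∈ G', 0 ≤ q.1 ∧ 0 ≤ q.2 := by
    intro q hq
    obtain ⟨s, t, hs, ht, h⟩ := hG (hG'.1 hq)
    obtain rfl : q = (s, t) := hΦ h
    exact ⟨hs, ht⟩
  have hhid : ∀ g b : ℝ × ℝ, ∀ s : ℝ, g ∈ G' → b ∈ G' → b ≠ g → 0 < s →
      Hidden G (Φ g) (Φ (b.1 + s * (b.1 - g.1), b.2 + s * (b.2 - g.2))) := by
    intro g b s hg hb hbg hs
    -- With `x = b + s (b - g)`, one has `b = s / (1 + s) * g + 1 / (1 + s) * x`.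
    refine ⟨Φ b, hG'.1 hb, hΦ.ne hbg, s / (1 + s), 1 / (1 + s), by positivity, by positivity,
      by field_simp; ring, ?_⟩
    simp only [Φ]
    match_scalars <;> field_simp <;> ring
  by_contra hcon
  have hdark : NoDark G' := by
    intro g hg b hb g' hg' b' hb' s t hbg hbg' hgg hs ht e1 e2 p1 p2
    refine hcon ⟨Φ (b.1 + s * (b.1 - g.1), b.2 + s * (b.2 - g.2)), ⟨_, _, p1, p2, rfl⟩,
      Φ g, hG'.1 hg, Φ g', hG'.1 hg', hΦ.ne hgg, hhid g b s hg hb hbg hs, ?_⟩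
    rw [e1, e2]
    exact hhid g' b' t hg' hb' hbg' ht
  have := quadrant hdark hpos
  omega
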